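/- Let C be a regular Ord-category, f,h: X→Y and g: Y→Z morphisms. Then: (1) f_* ≅ I_Y∘f_♯ and f^* ≅ f°∘I_Y as relations; (2) f_♯ ⊆ f_* and f° ⊆ f^*; (3) (g∘f)_* ≅ g_*∘f_*; (4) (g∘f)^* ≅ f^*∘g^*; (5) f ≼ h iff h_* ⊆ f_* iff f^* ⊆ h^*; (6) I_X ⊆ f^*∘f_*; (7) f_*∘f^* ⊆ I_Y; (8) f^*∘f_*∘f^* ≅ f^* and f_*∘f^*∘f_* ≅ f_*. -/

import Mathlib

open CategoryTheory

universe w v u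

/-- An `Ord`-enrichment of a category: a preorder on each hom-set,
preserved by composition on both sides. -/
class OrdEnrichment (C : Type u) [Category.{v} C] : Type (max u v) where
  ord : ∀ {X Y : C}, (X ⟶ Y) → (X ⟶ Y) → Prop
  ord_refl : ∀ {X Y : C} (f : X ⟶ Y), ord f f
  ord_trans : ∀ {X Y : C} {f g h : X ⟶ Y}, ord f g → ord g h → ord f h
  precomp_ord : ∀ {X Y Z : C} (e : X ⟶ Y) {f g : Y ⟶ Z}, ord f g → ord (e ≫ f) (e ≫ g)
  postcomp_ord : ∀ {X Y Z : C} {f g : X ⟶ Y} (h : Y ⟶ Z), ord f g → ord (f ≫ h) (g ≫ h)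

/-- The preorder on hom-sets of an `Ord`-category. -/
def homLe {C : Type u} [Category.{v} C] [OrdEnrichment C] {X Y : C} (f g : X ⟶ Y) : Prop :=
  OrdEnrichment.ord f g

infixl:50 " ≼ " => homLe

section

variable {C : Type u} [Category.{v} C] [OrdEnrichment C]

/-- A full (ff-) morphism. -/
def IsFF {X Y : C} (m : X ⟶ Y) : Prop :=
  ∀ {A : C} (a a' : A ⟶ X), (a ≫ m) ≼ (a' ≫ m) → a ≼ a'

/-- An ff-monomorphism: a full monomorphism. -/
def IsFFMono {X Y : C} (m : X ⟶ Y) : Prop := IsFF m ∧ Mono m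

/-- An so-morphism: a morphism left orthogonal to every ff-monomorphism. -/
def IsSO {A B : C} (e : A ⟶ B) : Prop :=
  ∀ {X Y : C} (m : X ⟶ Y), IsFFMono m → ∀ (u : A ⟶ X) (v : B ⟶ Y),
    u ≫ m = e ≫ v → ∃ d : B ⟶ X, e ≫ d = u ∧ d ≫ m = v

/-- The (strict) comma object square for the ordered pair `(f, g)`. -/
structure IsCommaSq {X Y Z : C} (f : X ⟶ Y) (g : Z ⟶ Y) (P : C)
    (π₁ : P ⟶ X) (π₂ : P ⟶ Z) : Prop where
  le : (π₁ ≫ f) ≼ (π₂ ≫ g)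
  lift : ∀ {A : C} (α : A ⟶ X) (β : A ⟶ Z), (α ≫ f) ≼ (β ≫ g) →
    ∃! h : A ⟶ P, h ≫ π₁ = α ∧ h ≫ π₂ = β
  lift_ord : ∀ {A : C} {h h' : A ⟶ P}, (h ≫ π₁) ≼ (h' ≫ π₁) → (h ≫ π₂) ≼ (h' ≫ π₂) → h ≼ h'

/-- A 2-pullback square (pullback with the `Ord`-enriched universal property). -/
structure Is2Pullback {X Y Z : C} (f : X ⟶ Z) (g : Y ⟶ Z) (P : C)
    (p : P ⟶ X) (q : P ⟶ Y) : Prop where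
  comm : p ≫ f = q ≫ g
  lift : ∀ {A : C} (a : A ⟶ X) (b : A ⟶ Y), a ≫ f = b ≫ g →
    ∃! h : A ⟶ P, h ≫ p = a ∧ h ≫ q = b
  lift_ord : ∀ {A : C} {h h' : A ⟶ P}, (h ≫ p) ≼ (h' ≫ p) → (h ≫ q) ≼ (h' ≫ q) → h ≼ h'

/-- A binary 2-product. -/
structure Is2Product (X Y : C) (P : C) (p : P ⟶ X) (q : P ⟶ Y) : Prop where
  lift : ∀ {A : C} (a : A ⟶ X) (b : A ⟶ Y), ∃! h : A ⟶ P, h ≫ p = a ∧ h ≫ q = b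
  lift_ord : ∀ {A : C} {h h' : A ⟶ P}, (h ≫ p) ≼ (h' ≫ p) → (h ≫ q) ≼ (h' ≫ q) → h ≼ h'

/-- A 2-equalizer. -/
structure Is2Equalizer {X Y : C} (f g : X ⟶ Y) (E : C) (i : E ⟶ X) : Prop where
  comm : i ≫ f = i ≫ g
  lift : ∀ {A : C} (a : A ⟶ X), a ≫ f = a ≫ g → ∃! h : A ⟶ E, h ≫ i = a
  lift_ord : ∀ {A : C} {h h' : A ⟶ E}, (h ≫ i) ≼ (h' ≫ i) → h ≼ h'

/-- A bicoinserter of a parallel pair. -/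
structure IsBicoinserter {X A E : C} (a b : X ⟶ A) (e : A ⟶ E) : Prop where
  le : (a ≫ e) ≼ (b ≫ e)
  desc : ∀ {F : C} (f : A ⟶ F), (a ≫ f) ≼ (b ≫ f) →
    ∃ t : E ⟶ F, (e ≫ t) ≼ f ∧ f ≼ (e ≫ t)
  desc_ord : ∀ {F : C} {f f' : A ⟶ F} {t t' : E ⟶ F},
    (e ≫ t) ≼ f → f ≼ (e ≫ t) → (e ≫ t') ≼ f' → f' ≼ (e ≫ t') → f ≼ f' → t ≼ t'

/-- A relation from `X` to `Y` in an `Ord`-category: a jointly ff-monomorphic span. -/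
structure RelStr (X Y : C) : Type (max u v) where
  obj : C
  p : obj ⟶ X
  q : obj ⟶ Y
  jointly_ff : ∀ {A : C} (a a' : A ⟶ obj), (a ≫ p) ≼ (a' ≫ p) → (a ≫ q) ≼ (a' ≫ q) → a ≼ a'
  jointly_mono : ∀ {A : C} (a a' : A ⟶ obj), a ≫ p = a' ≫ p → a ≫ q = a' ≫ q → a = a'

/-- `(x, y) ∈_A R`. -/
def RelStr.Mem {X Y : C} (R : RelStr X Y) {A : C} (x : A ⟶ X) (y : A ⟶ Y) : Prop :=
  ∃ h : A ⟶ R.obj, h ≫ R.p = x ∧ h ≫ R.q = y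

/-- `R ⊆ S`: `R` factors through `S` (over `X × Y`). -/
def RelStr.Sub {X Y : C} (R S : RelStr X Y) : Prop :=
  ∃ φ : R.obj ⟶ S.obj, φ ≫ S.p = R.p ∧ φ ≫ S.q = R.q

/-- `R ≅ S`: mutual factorisation. -/
def RelStr.Iso {X Y : C} (R S : RelStr X Y) : Prop := R.Sub S ∧ S.Sub R

/-- The opposite relation `R°`. -/
def RelStr.op {X Y : C} (R : RelStr X Y) : RelStr Y X where
  obj := R.obj
  p := R.q
  q := R.p
  jointly_ff := fun a a' h1 h2 => R.jointly_ff a a' h2 h1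
  jointly_mono := fun a a' h1 h2 => R.jointly_mono a a' h2 h1

/-- A relation is an (order) ideal when it is closed under lowering the first
coordinate and raising the second coordinate. -/
def IsIdealRel {X Y : C} (R : RelStr X Y) : Prop :=
  ∀ {A : C} (x x' : A ⟶ X) (y y' : A ⟶ Y), x' ≼ x → R.Mem x y → y ≼ y' → R.Mem x' y'

/-- The relation `f_♯` given by the span `(1_X, f)`. -/
def sharpRel {X Y : C} (f : X ⟶ Y) : RelStr X Y where
  obj := X
  p := 𝟙 X
  q := f
  jointly_ff := fun a a' h1 _ => by simpa using h1
  jointly_mono := fun a a' h1 _ => by simpa using h1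

/-- The relation `f°`, the opposite of `f_♯`. -/
def cosharpRel {X Y : C} (f : X ⟶ Y) : RelStr Y X := (sharpRel f).op

/-- `M` is the meet (intersection) `R ∧ S` of two relations. -/
def IsMeetRel {X Y : C} (R S M : RelStr X Y) : Prop :=
  M.Sub R ∧ M.Sub S ∧
    ∀ {A : C} (x : A ⟶ X) (y : A ⟶ Y), R.Mem x y → S.Mem x y → M.Mem x y

/-- `T` is the composite `S ∘ R` of the relations `R : X ↬ Y` and `S : Y ↬ Z`,
obtained via the (so-morphism, ff-monomorphism) factorisation of the span
given by the 2-pullback over the middle object. -/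
def IsCompositeRel {X Y Z : C} (R : RelStr X Y) (S : RelStr Y Z) (T : RelStr X Z) : Prop :=
  ∃ (P : C) (p₁ : P ⟶ R.obj) (p₂ : P ⟶ S.obj) (e : P ⟶ T.obj),
    Is2Pullback R.q S.p P p₁ p₂ ∧ IsSO e ∧ e ≫ T.p = p₁ ≫ R.p ∧ e ≫ T.q = p₂ ≫ S.q

/-- `R` is the ideal `f_* = f / 1_Y : X ↬ Y`. -/
def IsStarRel {X Y : C} (f : X ⟶ Y) (R : RelStr X Y) : Prop :=
  IsCommaSq f (𝟙 Y) R.obj R.p R.q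

/-- `R` is the ideal `f^* = 1_Y / f : Y ↬ X`. -/
def IsCostarRel {X Y : C} (f : X ⟶ Y) (R : RelStr Y X) : Prop :=
  IsCommaSq (𝟙 Y) f R.obj R.p R.q

/-- `R` is the identity ideal `I_X = 1_X / 1_X`. -/
def IsIdRel (X : C) (R : RelStr X X) : Prop :=
  IsCommaSq (𝟙 X) (𝟙 X) R.obj R.p R.q

/-- `S` is the 2-pullback of the relation `R ↣ X × Y` along `f × g`. -/
def IsRelPullback {X Y U V : C} (R : RelStr X Y) (f : U ⟶ X) (g : V ⟶ Y)
    (S : RelStr U V) : Prop :=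
  ∃ h : S.obj ⟶ R.obj, h ≫ R.p = S.p ≫ f ∧ h ≫ R.q = S.q ≫ g ∧
    ∀ {A : C} (a : A ⟶ U) (b : A ⟶ V) (c : A ⟶ R.obj),
      c ≫ R.p = a ≫ f → c ≫ R.q = b ≫ g →
      ∃ d : A ⟶ S.obj, d ≫ S.p = a ∧ d ≫ S.q = b ∧ d ≫ h = c

/-- A binary 2-coproduct. -/
structure Is2Coproduct (X Y : C) (P : C) (i : X ⟶ P) (j : Y ⟶ P) : Prop where
  desc : ∀ {A : C} (a : X ⟶ A) (b : Y ⟶ A), ∃! h : P ⟶ A, i ≫ h = a ∧ j ≫ h = b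
  desc_ord : ∀ {A : C} {h h' : P ⟶ A}, (i ≫ h) ≼ (i ≫ h') → (j ≫ h) ≼ (j ≫ h') → h ≼ h'

/-- A ternary 2-coproduct. -/
structure Is3Coproduct (X Y Z : C) (P : C) (i : X ⟶ P) (j : Y ⟶ P) (k : Z ⟶ P) : Prop where
  desc : ∀ {A : C} (a : X ⟶ A) (b : Y ⟶ A) (c : Z ⟶ A),
    ∃! h : P ⟶ A, i ≫ h = a ∧ j ≫ h = b ∧ k ≫ h = c
  desc_ord : ∀ {A : C} {h h' : P ⟶ A},
    (i ≫ h) ≼ (i ≫ h') → (j ≫ h) ≼ (j ≫ h') → (k ≫ h) ≼ (k ≫ h') → h ≼ h'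

/-- Reflexivity of a relation on `X`: the diagonal factors through it. -/
def ReflexiveRel {X : C} (R : RelStr X X) : Prop := R.Mem (𝟙 X) (𝟙 X)

/-- Transitivity of a relation on `X`: `R ∘ R ⊆ R`. -/
def TransitiveRel {X : C} (R : RelStr X X) : Prop :=
  ∀ T : RelStr X X, IsCompositeRel R R T → T.Sub R

/-- A congruence: a reflexive and transitive ideal. -/
def IsCongruence {X : C} (R : RelStr X X) : Prop :=
  IsIdealRel R ∧ ReflexiveRel R ∧ TransitiveRel R

/-- An effective congruence: `R ≅ f^* ∘ f_*` for some morphism `f`. -/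
def EffectiveCongruence {X : C} (R : RelStr X X) : Prop :=
  ∃ (Y : C) (f : X ⟶ Y) (Fstar : RelStr X Y) (Fco : RelStr Y X) (T : RelStr X X),
    IsStarRel f Fstar ∧ IsCostarRel f Fco ∧ IsCompositeRel Fstar Fco T ∧ R.Iso T

/-- The `Ord`-enriched difunctionality property of a relation. -/
def OrdDifunctional {X Y : C} (D : RelStr X Y) : Prop :=
  ∀ {A : C} (x u u' : A ⟶ X) (y y' v : A ⟶ Y),
    D.Mem x y → y ≼ y' → D.Mem u y' → u ≼ u' → D.Mem u' v → D.Mem x v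

end

/-- A regular `Ord`-category: finite weighted limits, an
(so-morphism, ff-monomorphism) factorisation system, so-morphisms stable under
2-pullbacks, and every so-morphism the bicoinserter of its comma object projections. -/
structure IsRegularOrd (C : Type u) [Category.{v} C] [OrdEnrichment C] : Prop where
  hasTerminal : ∃ T : C, ∀ A : C, ∃ f : A ⟶ T, ∀ g : A ⟶ T, g = f
  has2Products : ∀ X Y : C, ∃ (P : C) (p : P ⟶ X) (q : P ⟶ Y), Is2Product X Y P p q
  has2Equalizers : ∀ {X Y : C} (f g : X ⟶ Y), ∃ (E : C) (i : E ⟶ X), Is2Equalizer f g E i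
  has2Pullbacks : ∀ {X Y Z : C} (f : X ⟶ Z) (g : Y ⟶ Z),
    ∃ (P : C) (p : P ⟶ X) (q : P ⟶ Y), Is2Pullback f g P p q
  hasCommaObjects : ∀ {X Y Z : C} (f : X ⟶ Y) (g : Z ⟶ Y),
    ∃ (P : C) (p : P ⟶ X) (q : P ⟶ Z), IsCommaSq f g P p q
  fact : ∀ {X Y : C} (f : X ⟶ Y), ∃ (I : C) (e : X ⟶ I) (m : I ⟶ Y),
    IsSO e ∧ IsFFMono m ∧ e ≫ m = f
  so_pullback_stable : ∀ {X Y Z P : C} (f : X ⟶ Z) (g : Y ⟶ Z) (p : P ⟶ X) (q : P ⟶ Y),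
    Is2Pullback f g P p q → IsSO g → IsSO p
  so_bicoinserter : ∀ {A B P : C} (e : A ⟶ B), IsSO e →
    ∀ (π₁ π₂ : P ⟶ A), IsCommaSq e e P π₁ π₂ → IsBicoinserter π₁ π₂ e

/-- An `Ord`-Mal'tsev category: every ideal is `Ord`-difunctional. -/
def IsOrdMaltsev (C : Type u) [Category.{v} C] [OrdEnrichment C] : Prop :=
  ∀ (X Y : C) (D : RelStr X Y), IsIdealRel D → OrdDifunctional D

/-- An `Ord`-W-Mal'tsev object: every ideal is `Ord`-difunctional with respect to
generalised elements with domain `Y`. -/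
def IsOrdWMaltsevObj {C : Type u} [Category.{v} C] [OrdEnrichment C] (Y : C) : Prop :=
  ∀ (X Z : C) (R : RelStr X Z), IsIdealRel R →
    ∀ (x u u' : Y ⟶ X) (z z' v : Y ⟶ Z),
      R.Mem x z → z ≼ z' → R.Mem u z' → u ≼ u' → R.Mem u' v → R.Mem x v


section Helpers

variable {C : Type u} [Category.{v} C] [OrdEnrichment C]

theorem homLe_refl' {X Y : C} (f : X ⟶ Y) : f ≼ f := OrdEnrichment.ord_refl f

theorem homLe_trans' {X Y : C} {f g h : X ⟶ Y} (h1 : f ≼ g) (h2 : g ≼ h) : f ≼ h :=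
  OrdEnrichment.ord_trans h1 h2

theorem homLe_pre {X Y Z : C} (e : X ⟶ Y) {f g : Y ⟶ Z} (h : f ≼ g) : (e ≫ f) ≼ (e ≫ g) :=
  OrdEnrichment.precomp_ord e h

theorem homLe_post {X Y Z : C} {f g : X ⟶ Y} (k : Y ⟶ Z) (h : f ≼ g) : (f ≫ k) ≼ (g ≫ k) :=
  OrdEnrichment.postcomp_ord k h

theorem sub_of_mem {X Y : C} {R S : RelStr X Y} (h : S.Mem R.p R.q) : R.Sub S := h

theorem mem_self {X Y : C} (R : RelStr X Y) : R.Mem R.p R.q := ⟨𝟙 _, by simp, by simp⟩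

theorem mem_of_sub {X Y A : C} {R S : RelStr X Y} (h : R.Sub S) {x : A ⟶ X} {y : A ⟶ Y}
    (m : R.Mem x y) : S.Mem x y := by
  obtain ⟨φ, h1, h2⟩ := h
  obtain ⟨a, rfl, rfl⟩ := m
  exact ⟨a ≫ φ, by simp [h1], by simp [h2]⟩

theorem comma_mem {X Y Z A : C} {f : X ⟶ Y} {g : Z ⟶ Y} {R : RelStr X Z}
    (hR : IsCommaSq f g R.obj R.p R.q) (x : A ⟶ X) (z : A ⟶ Z) :
    R.Mem x z ↔ (x ≫ f) ≼ (z ≫ g) := by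
  constructor
  · rintro ⟨a, rfl, rfl⟩
    simpa using homLe_pre a hR.le
  · intro h
    obtain ⟨a, ha, -⟩ := hR.lift x z h
    exact ⟨a, ha⟩

theorem star_mem {X Y A : C} {f : X ⟶ Y} {R : RelStr X Y} (hR : IsStarRel f R)
    (x : A ⟶ X) (y : A ⟶ Y) : R.Mem x y ↔ (x ≫ f) ≼ y := by
  simpa using comma_mem hR x y

theorem costar_mem {X Y A : C} {f : X ⟶ Y} {R : RelStr Y X} (hR : IsCostarRel f R)
    (y : A ⟶ Y) (x : A ⟶ X) : R.Mem y x ↔ y ≼ (x ≫ f) := by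
  simpa using comma_mem hR y x

theorem id_mem {X A : C} {R : RelStr X X} (hR : IsIdRel X R)
    (x y : A ⟶ X) : R.Mem x y ↔ x ≼ y := by
  simpa using comma_mem hR x y

theorem sharp_mem {X Y A : C} (f : X ⟶ Y) (x : A ⟶ X) (y : A ⟶ Y) :
    (sharpRel f).Mem x y ↔ x ≫ f = y := by
  constructor
  · rintro ⟨a, h1, h2⟩
    have h3 : a = x := (Category.comp_id (Y := X) a).symm.trans h1
    subst h3
    exact h2
  · intro h
    exact ⟨x, by simp [sharpRel], h⟩

theorem cosharp_mem {X Y A : C} (f : X ⟶ Y) (y : A ⟶ Y) (x : A ⟶ X) :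
    (cosharpRel f).Mem y x ↔ x ≫ f = y := by
  rw [← sharp_mem]
  constructor
  · rintro ⟨a, h1, h2⟩
    exact ⟨a, h2, h1⟩
  · rintro ⟨a, h1, h2⟩
    exact ⟨a, h2, h1⟩

theorem comp_mem {X Y Z A : C} {R : RelStr X Y} {S : RelStr Y Z} {T : RelStr X Z}
    (hT : IsCompositeRel R S T) {x : A ⟶ X} {y : A ⟶ Y} {z : A ⟶ Z}
    (h1 : R.Mem x y) (h2 : S.Mem y z) : T.Mem x z := by
  obtain ⟨P, p₁, p₂, e, hP, -, ep, eq⟩ := hT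
  obtain ⟨a, rfl, rfl⟩ := h1
  obtain ⟨b, hb, rfl⟩ := h2
  obtain ⟨k, ⟨rfl, rfl⟩, -⟩ := hP.lift a b hb.symm
  exact ⟨k ≫ e, by simp [ep], by simp [eq]⟩

theorem comp_sub (hC : IsRegularOrd C) {X Y Z : C} {R : RelStr X Y} {S : RelStr Y Z}
    {T : RelStr X Z} (hT : IsCompositeRel R S T) (W : RelStr X Z)
    (hW : ∀ {A : C} (x : A ⟶ X) (y : A ⟶ Y) (z : A ⟶ Z), R.Mem x y → S.Mem y z → W.Mem x z) :
    T.Sub W := by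
  obtain ⟨P, p₁, p₂, e, hP, he, ep, eq⟩ := hT
  obtain ⟨w, w1, w2⟩ := hW (p₁ ≫ R.p) (p₁ ≫ R.q) (p₂ ≫ S.q) ⟨p₁, rfl, rfl⟩
    ⟨p₂, hP.comm.symm, rfl⟩
  obtain ⟨Q, a, b, hQ⟩ := hC.has2Products X Z
  obtain ⟨m, ⟨m1, m2⟩, -⟩ := hQ.lift W.p W.q
  obtain ⟨t, ⟨t1, t2⟩, -⟩ := hQ.lift T.p T.q
  have hm : IsFFMono m := by
    refine ⟨?_, ⟨?_⟩⟩
    · intro A c c' hc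
      apply W.jointly_ff
      · simpa [m1] using homLe_post a hc
      · simpa [m2] using homLe_post b hc
    · intro A c c' hc
      apply W.jointly_mono
      · simpa [m1] using congrArg (· ≫ a) hc
      · simpa [m2] using congrArg (· ≫ b) hc
  obtain ⟨d, -, hd⟩ := he m hm w t (by
    apply (hQ.lift (p₁ ≫ R.p) (p₂ ≫ S.q)).unique
    · exact ⟨by simp [m1, w1], by simp [m2, w2]⟩
    · exact ⟨by simp [t1, ep], by simp [t2, eq]⟩)
  exact ⟨d, by rw [← m1, ← t1, ← hd, Category.assoc], by rw [← m2, ← t2, ← hd, Category.assoc]⟩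

theorem exists_comma (hC : IsRegularOrd C) {X Y Z : C} (f : X ⟶ Y) (g : Z ⟶ Y) :
    ∃ R : RelStr X Z, IsCommaSq f g R.obj R.p R.q := by
  obtain ⟨P, p, q, h⟩ := hC.hasCommaObjects f g
  refine ⟨⟨P, p, q, fun a a' h1 h2 => h.lift_ord h1 h2, fun a a' h1 h2 => ?_⟩, h⟩
  refine (h.lift (a' ≫ p) (a' ≫ q) ?_).unique ⟨h1, h2⟩ ⟨rfl, rfl⟩
  simpa using homLe_pre a' h.le

end Helpers

/-- Basic properties of the ideals `f_*` and `f^*` in a regular `Ord`-category. -/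
theorem statement2 {C : Type u} [Category.{v} C] [OrdEnrichment C] (hC : IsRegularOrd C)
    {X Y Z : C} (f h : X ⟶ Y) (g : Y ⟶ Z)
    (IX : RelStr X X) (hIX : IsIdRel X IX) (IY : RelStr Y Y) (hIY : IsIdRel Y IY)
    (Fstar : RelStr X Y) (hFstar : IsStarRel f Fstar)
    (Fco : RelStr Y X) (hFco : IsCostarRel f Fco)
    (Hstar : RelStr X Y) (hHstar : IsStarRel h Hstar)
    (Hco : RelStr Y X) (hHco : IsCostarRel h Hco)
    (Gstar : RelStr Y Z) (hGstar : IsStarRel g Gstar)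
    (Gco : RelStr Z Y) (hGco : IsCostarRel g Gco)
    (GFstar : RelStr X Z) (hGFstar : IsStarRel (f ≫ g) GFstar)
    (GFco : RelStr Z X) (hGFco : IsCostarRel (f ≫ g) GFco) :
    -- (1) `f_* ≅ I_Y ∘ f_♯` and `f^* ≅ f° ∘ I_Y`
    (∀ T : RelStr X Y, IsCompositeRel (sharpRel f) IY T → T.Iso Fstar) ∧
    (∀ T : RelStr Y X, IsCompositeRel IY (cosharpRel f) T → T.Iso Fco) ∧
    -- (2) `f_♯ ⊆ f_*` and `f° ⊆ f^*`
    ((sharpRel f).Sub Fstar ∧ (cosharpRel f).Sub Fco) ∧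
    -- (3) `(g ∘ f)_* ≅ g_* ∘ f_*`
    (∀ T : RelStr X Z, IsCompositeRel Fstar Gstar T → T.Iso GFstar) ∧
    -- (4) `(g ∘ f)^* ≅ f^* ∘ g^*`
    (∀ T : RelStr Z X, IsCompositeRel Gco Fco T → T.Iso GFco) ∧
    -- (5) `f ≼ h ↔ h_* ⊆ f_* ↔ f^* ⊆ h^*`
    ((f ≼ h ↔ Hstar.Sub Fstar) ∧ (f ≼ h ↔ Fco.Sub Hco)) ∧
    -- (6) `I_X ⊆ f^* ∘ f_*`
    (∀ T : RelStr X X, IsCompositeRel Fstar Fco T → IX.Sub T) ∧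
    -- (7) `f_* ∘ f^* ⊆ I_Y`
    (∀ T : RelStr Y Y, IsCompositeRel Fco Fstar T → T.Sub IY) ∧
    -- (8) `f^* ∘ f_* ∘ f^* ≅ f^*` and `f_* ∘ f^* ∘ f_* ≅ f_*`
    (∀ (T : RelStr Y Y) (U : RelStr Y X),
      IsCompositeRel Fco Fstar T → IsCompositeRel T Fco U → U.Iso Fco) ∧
    (∀ (T : RelStr X X) (U : RelStr X Y),
      IsCompositeRel Fstar Fco T → IsCompositeRel T Fstar U → U.Iso Fstar) := by
  have selfFs := (star_mem hFstar _ _).1 (mem_self Fstar)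
  have selfFc := (costar_mem hFco _ _).1 (mem_self Fco)
  refine ⟨?_, ?_, ⟨?_, ?_⟩, ?_, ?_, ⟨⟨?_, ?_⟩, ⟨?_, ?_⟩⟩, ?_, ?_, ?_, ?_⟩
  · intro T hT
    refine ⟨comp_sub hC hT _ ?_, ?_⟩
    · intro A x y z h1 h2
      rw [sharp_mem] at h1
      rw [id_mem hIY] at h2
      rw [star_mem hFstar, h1]
      exact h2
    · exact comp_mem hT ((sharp_mem f _ _).2 rfl) ((id_mem hIY _ _).2 selfFs)
  · intro T hT
    refine ⟨comp_sub hC hT _ ?_, ?_⟩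
    · intro A x y z h1 h2
      rw [cosharp_mem] at h2
      rw [id_mem hIY] at h1
      rw [costar_mem hFco, h2]
      exact h1
    · exact comp_mem hT ((id_mem hIY _ _).2 selfFc) ((cosharp_mem f _ _).2 rfl)
  · apply sub_of_mem
    rw [star_mem hFstar, (sharp_mem f _ _).1 (mem_self (sharpRel f))]
    exact homLe_refl' _
  · apply sub_of_mem
    rw [costar_mem hFco, (cosharp_mem f _ _).1 (mem_self (cosharpRel f))]
    exact homLe_refl' _
  · intro T hT
    refine ⟨comp_sub hC hT _ ?_, ?_⟩
    · intro A x y z h1 h2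
      rw [star_mem hFstar] at h1
      rw [star_mem hGstar] at h2
      rw [star_mem hGFstar, ← Category.assoc]
      exact homLe_trans' (homLe_post g h1) h2
    · have hs := (star_mem hGFstar _ _).1 (mem_self GFstar)
      rw [← Category.assoc] at hs
      exact comp_mem hT ((star_mem hFstar _ _).2 (homLe_refl' _)) ((star_mem hGstar _ _).2 hs)
  · intro T hT
    refine ⟨comp_sub hC hT _ ?_, ?_⟩
    · intro A x y z h1 h2
      rw [costar_mem hGco] at h1
      rw [costar_mem hFco] at h2
      rw [costar_mem hGFco, ← Category.assoc]
      exact homLe_trans' h1 (homLe_post g h2)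
    · have hs := (costar_mem hGFco _ _).1 (mem_self GFco)
      rw [← Category.assoc] at hs
      exact comp_mem hT ((costar_mem hGco _ _).2 hs) ((costar_mem hFco _ _).2 (homLe_refl' _))
  · intro hfh
    exact (star_mem hFstar _ _).2 (homLe_trans' (homLe_pre _ hfh)
      ((star_mem hHstar _ _).1 (mem_self Hstar)))
  · intro hs
    have := mem_of_sub hs ((star_mem hHstar (𝟙 X) (𝟙 X ≫ h)).2 (homLe_refl' _))
    simpa [star_mem hFstar] using this
  · intro hfh
    exact (costar_mem hHco _ _).2 (homLe_trans' selfFc (homLe_pre _ hfh))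
  · intro hs
    have := mem_of_sub hs ((costar_mem hFco (𝟙 X ≫ f) (𝟙 X)).2 (homLe_refl' _))
    simpa [costar_mem hHco] using this
  · intro T hT
    exact comp_mem hT ((star_mem hFstar _ _).2 (homLe_refl' _))
      ((costar_mem hFco _ _).2 (homLe_post f ((id_mem hIX _ _).1 (mem_self IX))))
  · intro T hT
    exact comp_sub hC hT _ fun x y z h1 h2 => (id_mem hIY _ _).2
      (homLe_trans' ((costar_mem hFco _ _).1 h1) ((star_mem hFstar _ _).1 h2))
  · intro T U hT hU
    have hTI : T.Sub IY := comp_sub hC hT _ fun x y z h1 h2 => (id_mem hIY _ _).2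
      (homLe_trans' ((costar_mem hFco _ _).1 h1) ((star_mem hFstar _ _).1 h2))
    refine ⟨comp_sub hC hU _ fun x y z h1 h2 => (costar_mem hFco _ _).2
      (homLe_trans' ((id_mem hIY _ _).1 (mem_of_sub hTI h1)) ((costar_mem hFco _ _).1 h2)), ?_⟩
    exact comp_mem hU (comp_mem hT (mem_self Fco) ((star_mem hFstar _ _).2 (homLe_refl' _)))
      ((costar_mem hFco _ _).2 (homLe_refl' _))
  · intro T U hT hU
    obtain ⟨W, hW⟩ := exists_comma hC f f
    have hTW : T.Sub W := comp_sub hC hT _ fun x y z h1 h2 => (comma_mem hW _ _).2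
      (homLe_trans' ((star_mem hFstar _ _).1 h1) ((costar_mem hFco _ _).1 h2))
    refine ⟨comp_sub hC hU _ fun x y z h1 h2 => (star_mem hFstar _ _).2
      (homLe_trans' ((comma_mem hW _ _).1 (mem_of_sub hTW h1)) ((star_mem hFstar _ _).1 h2)), ?_⟩
    exact comp_mem hU (comp_mem hT ((star_mem hFstar _ _).2 (homLe_refl' _))
      ((costar_mem hFco _ _).2 (homLe_refl' _))) (mem_self Fstar)
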